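/- A graph is chordal bipartite if and only if every induced subgraph has a weakly simplicial vertex; moreover, every nontrivial chordal bipartite graph (one with at least one edge) has a weakly simplicial vertex in each partition class. -/

import Mathlib

/-- `G` has an induced cycle on `n` vertices. -/
def HasInducedCycleOn {α : Type} (G : SimpleGraph α) (n : ℕ) : Prop :=
  ∃ f : ZMod n → α, Function.Injective f ∧
    ∀ i j : ZMod n, G.Adj (f i) (f j) ↔ (j = i + 1 ∨ i = j + 1)

/-- A graph is chordal bipartite if it is bipartite and has no induced cycle on 6
or more vertices. -/
def ChordalBipartite {α : Type} (G : SimpleGraph α) : Prop :=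
  G.Colorable 2 ∧ ∀ n : ℕ, 6 ≤ n → ¬ HasInducedCycleOn G n

/-- A vertex is weakly simplicial if its neighbourhood is an independent set and
the neighbourhoods of its neighbours form a chain under inclusion. -/
def WeaklySimplicialVtx {α : Type} (G : SimpleGraph α) (v : α) : Prop :=
  (∀ u w, G.Adj v u → G.Adj v w → ¬ G.Adj u w) ∧
    ∀ u w, G.Adj v u → G.Adj v w →
      G.neighborSet u ⊆ G.neighborSet w ∨ G.neighborSet w ⊆ G.neighborSet u

/-- A bipartition of `G` into classes `V₁`, `V₂`. -/
def IsBipartitionOf {α : Type} (G : SimpleGraph α) (V₁ V₂ : Set α) : Prop :=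
  V₁ ∪ V₂ = Set.univ ∧ Disjoint V₁ V₂ ∧
    ∀ u v, G.Adj u v → (u ∈ V₁ ∧ v ∈ V₂) ∨ (u ∈ V₂ ∧ v ∈ V₁)

section Helpers

open Classical

/-- A shortest path between the two neighbours `s`, `t` of `p` inside `W`, closed up through `p`,
is an induced cycle. -/
theorem cycle_of_path {α : Type} (G : SimpleGraph α) (W : Set α) (p : α) (hp : p ∉ W)
    (s t : W) (hps : G.Adj p s) (hpt : G.Adj p t)
    (hN : ∀ x ∈ W, G.Adj p x → x = s ∨ x = t)
    (hr : (G.induce W).Reachable s t)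
    (hlen : ∀ q : (G.induce W).Walk s t, 4 ≤ q.length) :
    ∃ n, 6 ≤ n ∧ HasInducedCycleOn G n := by
  obtain ⟨q, hq⟩ := hr.exists_walk_length_eq_dist
  have hmin : ∀ q' : (G.induce W).Walk s t, q.length ≤ q'.length := fun q' => by
    rw [hq]; exact SimpleGraph.dist_le q'
  set m := q.length with hm
  have hm4 : 4 ≤ m := hlen q
  have key1 : ∀ i j, i ≤ j → j ≤ m → q.getVert i = q.getVert j → i = j := by
    intro i j hij hj h
    have := hmin ((q.take i).append ((q.drop j).copy h.symm rfl))
    simp [SimpleGraph.Walk.length_append, SimpleGraph.Walk.take_length,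
      SimpleGraph.Walk.drop_length] at this
    omega
  have key2 : ∀ i j, i ≤ j → j ≤ m → G.Adj (q.getVert i) (q.getVert j) → j = i + 1 := by
    intro i j hij hj h
    have hne : i ≠ j := by rintro rfl; exact G.loopless.irrefl _ h
    have h' : (G.induce W).Adj (q.getVert i) (q.getVert j) := h
    have := hmin ((q.take i).append (SimpleGraph.Walk.cons h' (q.drop j)))
    simp [SimpleGraph.Walk.length_append, SimpleGraph.Walk.take_length,
      SimpleGraph.Walk.drop_length] at this
    omega
  have key3 : ∀ i, i < m → G.Adj (q.getVert i) (q.getVert (i+1)) := fun i hi =>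
    q.adj_getVert_succ hi
  have key4 : ∀ i, i ≤ m → (G.Adj p (q.getVert i) ↔ i = 0 ∨ i = m) := by
    intro i hi
    constructor
    · intro h
      rcases hN _ (q.getVert i).2 h with h | h
      · left
        exact (key1 0 i (by omega) hi (by simpa using (Subtype.ext h).symm)).symm
      · right
        exact (key1 i m hi le_rfl (by rw [hm, q.getVert_length]; exact Subtype.ext h))
    · rintro (rfl | rfl)
      · simpa using hps
      · rw [hm, q.getVert_length]; exact hpt
  have key5 : ∀ i j, i ≤ m → j ≤ m →
      (G.Adj (q.getVert i) (q.getVert j) ↔ j = i + 1 ∨ i = j + 1) := by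
    intro i j hi hj
    constructor
    · intro h
      rcases le_total i j with hij | hij
      · exact Or.inl (key2 i j hij hj h)
      · exact Or.inr (key2 j i hij hi h.symm)
    · rintro (rfl | rfl)
      · exact key3 i (by omega)
      · exact (key3 j (by omega)).symm
  refine ⟨m + 2, by omega, fun i : Fin (m+2) => if i.val = m + 1 then p else (q.getVert i.val : α),
    ?_, ?_⟩
  · intro i j h
    change Fin (m+2) at i j
    apply Fin.ext
    have hi := i.2
    have hj := j.2
    dsimp only at h
    split_ifs at h with h1 h2 h2
    · omega
    · exact absurd (h ▸ (q.getVert j.val).2) hp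
    · exact absurd (h ▸ (q.getVert i.val).2) hp
    · rcases le_total i.val j.val with hij | hij
      · exact key1 _ _ hij (by omega) (Subtype.ext h)
      · exact (key1 _ _ hij (by omega) (Subtype.ext h).symm).symm
  · have hsucc : ∀ i j : Fin (m+2), j = i + 1 ↔
        (j.val = i.val + 1 ∨ (i.val = m + 1 ∧ j.val = 0)) := by
      intro i j
      rw [Fin.ext_iff, Fin.val_add_one]
      have hi := i.2
      have hj := j.2
      simp only [Fin.ext_iff, Fin.val_last]
      split_ifs <;> omega
    intro i j
    change Fin (m+2) at i j
    have e1 := hsucc i j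
    have e2 := hsucc j i
    have hi := i.2
    have hj := j.2
    refine Iff.trans ?_ (or_congr e1 e2).symm
    dsimp only
    split_ifs with h1 h2 h2
    · have hirr := G.loopless.irrefl p
      constructor
      · exact fun hh => absurd hh hirr
      · intro hh; clear e1 e2; omega
    · rw [key4 _ (by omega)]; omega
    · rw [G.adj_comm, key4 _ (by omega)]; omega
    · rw [key5 _ _ (by omega) (by omega)]; omega

/-- Key lemma: nest points outside a given edge. -/
theorem exists_nest {α : Type} [Fintype α] (G : SimpleGraph α)
    (hG : ∀ n : ℕ, 6 ≤ n → ¬ HasInducedCycleOn G n) (V₁ V₂ : Set α)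
    (hb : IsBipartitionOf G V₁ V₂) :
    ∀ (k : ℕ) (T : Finset α) (A : Set α), T.card ≤ k → ↑T ⊆ V₂ → A ⊆ V₁ →
      ∀ b₀ ∈ T, ∀ a ∈ A, ¬ G.Adj b₀ a →
      ∃ v ∈ A, ¬ G.Adj b₀ v ∧ ∀ u ∈ T, ∀ w ∈ T, G.Adj v u → G.Adj v w →
        (∀ x ∈ A, G.Adj u x → G.Adj w x) ∨ (∀ x ∈ A, G.Adj w x → G.Adj u x) := by
  have hdis : ∀ x, x ∈ V₁ → x ∈ V₂ → False := fun x h1 h2 =>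
    Set.disjoint_left.1 hb.2.1 h1 h2
  have h11 : ∀ x ∈ V₁, ∀ y ∈ V₁, ¬ G.Adj x y := by
    intro x hx y hy h
    rcases hb.2.2 x y h with h | h
    · exact hdis _ hy h.2
    · exact hdis _ hx h.1
  have h22 : ∀ x ∈ V₂, ∀ y ∈ V₂, ¬ G.Adj x y := by
    intro x hx y hy h
    rcases hb.2.2 x y h with h | h
    · exact hdis _ h.1 hx
    · exact hdis _ h.2 hy
  intro k
  induction k with
  | zero =>
    intro T A hT _ _ b₀ hb₀
    have : T = ∅ := by simpa using hT
    simp [this] at hb₀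
  | succ k ih =>
    intro T A hT hTV hAV b₀ hb₀ a ha hab
    by_cases hnb : ∃ f₀ ∈ T, G.Adj a f₀
    swap
    · exact ⟨a, ha, hab, fun u hu w _ h => absurd ⟨u, hu, h⟩ hnb⟩
    obtain ⟨f₀, hf₀, haf₀⟩ := hnb
    -- adjacency of edges through points outside `b₀`
    let R : α → α → Prop := fun f g => f ∈ T ∧ g ∈ T ∧ ∃ x ∈ A, ¬ G.Adj b₀ x ∧ G.Adj f x ∧ G.Adj g x
    have Rsymm : ∀ f g, R f g → R g f := fun f g ⟨h1, h2, x, hx, h3, h4, h5⟩ =>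
      ⟨h2, h1, x, hx, h3, h5, h4⟩
    let CT : Finset α := T.filter (fun f => Relation.ReflTransGen R f₀ f)
    have hCT : ∀ f, f ∈ CT ↔ f ∈ T ∧ Relation.ReflTransGen R f₀ f := fun f => by simp [CT]
    have hf₀C : f₀ ∈ CT := (hCT _).2 ⟨hf₀, .refl⟩
    have hclosed : ∀ f ∈ CT, ∀ g, R f g → g ∈ CT := fun f hf g h =>
      (hCT _).2 ⟨h.2.1, ((hCT _).1 hf).2.tail h⟩
    have hb₀C : b₀ ∉ CT := by
      intro h
      rcases Relation.ReflTransGen.cases_tail ((hCT _).1 h).2 with h | ⟨c, _, h⟩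
      · exact hab (h ▸ haf₀.symm)
      · obtain ⟨_, _, x, _, h1, _, h2⟩ := h
        exact h1 h2
    let tr : α → Finset α := fun e => Finset.univ.filter (fun x => x ∈ A ∧ G.Adj b₀ x ∧ G.Adj e x)
    obtain ⟨e, heC, hemax⟩ := Finset.exists_max_image CT (fun e => (tr e).card) ⟨f₀, hf₀C⟩
    have heT := ((hCT _).1 heC).1
    have claim : ∀ f ∈ CT, ∀ s ∈ A, G.Adj b₀ s → G.Adj f s → G.Adj e s := by
      intro f' hf' s hsA hbs hf's
      by_contra hes
      let Rd : α → α → Prop := fun f g => R f g ∧ ¬ G.Adj g s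
      have hex : ∃ g f, Relation.ReflTransGen Rd e g ∧ R g f ∧ f ∈ CT ∧ G.Adj f s := by
        by_contra hno
        have hall : ∀ g, Relation.ReflTransGen R e g → g ∈ CT ∧ Relation.ReflTransGen Rd e g := by
          intro g hg
          induction hg with
          | refl => exact ⟨heC, .refl⟩
          | tail _ h ih =>
            rename_i b c _
            have hc := hclosed _ ih.1 _ h
            refine ⟨hc, ih.2.tail ⟨h, fun hs => hno ⟨b, c, ih.2, h, hc, hs⟩⟩⟩
        have h1 : Relation.ReflTransGen R e f' :=
          ((@Relation.ReflTransGen.stdSymm _ R ⟨Rsymm⟩).symm _ _ ((hCT _).1 heC).2).trans ((hCT _).1 hf').2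
        have h2 := (hall _ h1).2
        rcases Relation.ReflTransGen.cases_tail h2 with h | ⟨c, _, h⟩
        · exact hes (h ▸ hf's)
        · exact h.2 hf's
      obtain ⟨g, f, hg, hgf, hfC, hfs⟩ := hex
      have hfT := ((hCT _).1 hfC).1
      have ht : ∃ t ∈ A, G.Adj b₀ t ∧ G.Adj e t ∧ ¬ G.Adj f t := by
        by_contra hno
        push Not at hno
        have hss : tr e ⊂ tr f := by
          rw [Finset.ssubset_iff_of_subset]
          · exact ⟨s, by simp [tr, hsA, hbs, hfs], by simp [tr, hes]⟩
          · intro x hx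
            simp only [tr, Finset.mem_filter, Finset.mem_univ, true_and] at hx ⊢
            exact ⟨hx.1, hx.2.1, hno x hx.1 hx.2.1 hx.2.2⟩
        exact absurd (hemax f hfC) (not_le.2 (Finset.card_lt_card hss))
      obtain ⟨t, htA, hbt, het, hft⟩ := ht
      let D : Set α := {h | h ∈ T ∧ Relation.ReflTransGen Rd e h}
      have hDs : ∀ h ∈ D, ¬ G.Adj h s := by
        intro h hh
        rcases Relation.ReflTransGen.cases_tail hh.2 with h | ⟨c, _, h⟩
        · exact h ▸ hes
        · exact h.2
      let W : Set α := {x | x = s ∨ x = t ∨ x = f ∨ x ∈ D ∨ (x ∈ A ∧ ¬ G.Adj b₀ x)}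
      have hsW : s ∈ W := Or.inl rfl
      have htW : t ∈ W := Or.inr (Or.inl rfl)
      have hfW : f ∈ W := Or.inr (Or.inr (Or.inl rfl))
      have hDW : ∀ x ∈ D, x ∈ W := fun x hx => Or.inr (Or.inr (Or.inr (Or.inl hx)))
      have hAW : ∀ x ∈ A, ¬ G.Adj b₀ x → x ∈ W :=
        fun x hx h => Or.inr (Or.inr (Or.inr (Or.inr ⟨hx, h⟩)))
      have hb₀V := hTV hb₀
      have hb₀f : ∀ x ∈ A, ¬ G.Adj b₀ x → ¬ (x = b₀) := fun x hx _ h =>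
        hdis x (hAV hx) (h ▸ hb₀V)
      have hRW : ∀ x y (hx : x ∈ W) (hy : y ∈ W), R x y →
          (G.induce W).Reachable ⟨x, hx⟩ ⟨y, hy⟩ := by
        rintro x y hx hy ⟨_, _, z, hz, h1, h2, h3⟩
        have a1 : (G.induce W).Adj ⟨x, hx⟩ ⟨z, hAW z hz h1⟩ := h2
        have a2 : (G.induce W).Adj ⟨z, hAW z hz h1⟩ ⟨y, hy⟩ := h3.symm
        exact a1.reachable.trans a2.reachable
      have heD : e ∈ D := ⟨heT, .refl⟩
      have hreach : ∀ h, Relation.ReflTransGen Rd e h → ∃ hh : h ∈ D,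
          (G.induce W).Reachable ⟨e, hDW e heD⟩ ⟨h, hDW h hh⟩ := by
        intro h hh
        induction hh with
        | refl => exact ⟨heD, .refl _⟩
        | tail h1 h2 ih =>
          obtain ⟨hb, hbr⟩ := ih
          exact ⟨⟨h2.1.2.1, h1.tail h2⟩, hbr.trans (hRW _ _ _ _ h2.1)⟩
      obtain ⟨hgD, hgr⟩ := hreach g hg
      have hst : (G.induce W).Reachable ⟨s, hsW⟩ ⟨t, htW⟩ := by
        have a1 : (G.induce W).Adj ⟨s, hsW⟩ ⟨f, hfW⟩ := hfs.symm
        have a2 : (G.induce W).Adj ⟨e, hDW e heD⟩ ⟨t, htW⟩ := het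
        exact (a1.reachable.trans (hRW _ _ _ _ (Rsymm _ _ hgf))).trans
          (hgr.symm.trans a2.reachable)
      have hsN : ∀ x ∈ W, G.Adj s x → x = f := by
        rintro x (rfl | rfl | rfl | hx | hx) h
        · exact absurd h (G.loopless.irrefl _)
        · exact absurd h (h11 _ (hAV hsA) _ (hAV htA))
        · rfl
        · exact absurd h.symm (hDs x hx)
        · exact absurd h (h11 _ (hAV hsA) _ (hAV hx.1))
      have htN : ∀ x ∈ W, G.Adj x t → x ∈ V₂ := by
        intro x _ h
        rcases hb.2.2 _ _ h with h | h
        · exact absurd h.2 (fun h2 => hdis _ (hAV htA) h2)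
        · exact h.1
      have hne : s ≠ t := fun h => hes (h ▸ het)
      obtain ⟨n, hn, hc⟩ := cycle_of_path G W b₀ (by
          rintro (h | h | h | h | h)
          · exact G.loopless.irrefl _ (h ▸ hbs)
          · exact G.loopless.irrefl _ (h ▸ hbt)
          · exact hb₀C (h ▸ hfC)
          · have hb₀D : ∀ x, Relation.ReflTransGen Rd e x → x ∈ CT := by
              intro x hx
              induction hx with
              | refl => exact heC
              | tail _ h2 ih => exact hclosed _ ih _ h2.1
            exact hb₀C (hb₀D _ h.2)
          · exact hb₀f _ h.1 h.2 rfl)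
        ⟨s, hsW⟩ ⟨t, htW⟩ hbs hbt (by
          rintro x (h | h | h | h | h) hx
          · exact Or.inl h
          · exact Or.inr h
          · exact absurd hx (h22 _ hb₀V _ (h ▸ hTV hfT))
          · exact absurd hx (h22 _ hb₀V _ (hTV h.1))
          · exact absurd hx h.2) hst (by
          intro q
          by_contra hlt
          cases q with
          | nil => exact hne rfl
          | cons h1 q1 =>
            rename_i v1
            have e1 : v1.1 = f := hsN _ v1.2 h1
            cases q1 with
            | nil => 
              exact h11 _ (hAV hsA) _ (hAV htA) h1
            | cons h2 q2 =>
              rename_i v2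
              cases q2 with
              | nil => exact hft (e1 ▸ h2)
              | cons h3 q3 =>
                rename_i v3
                cases q3 with
                | nil =>
                  have := htN _ v2.2 h3
                  exact h22 _ (hTV hfT) _ this (e1 ▸ h2)
                | cons h4 q4 =>
                  simp at hlt)
      exact hG n hn hc
    -- the restricted hypergraph
    let A' : Set α := {x | x ∈ A ∧ ∃ f ∈ CT, G.Adj f x}
    have hA'A : A' ⊆ A := fun x hx => hx.1
    have haA' : a ∈ A' := ⟨ha, f₀, hf₀C, haf₀.symm⟩
    have hnbC : ∀ v ∈ A', ¬ G.Adj b₀ v → ∀ u ∈ T, G.Adj v u → u ∈ CT := by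
      rintro v ⟨hv, f, hf, hfv⟩ hbv u hu hvu
      exact hclosed f hf u ⟨((hCT _).1 hf).1, hu, v, hv, hbv, hfv, hvu.symm⟩
    have hCTT : CT ⊆ T := Finset.filter_subset _ _
    have hcard : CT.card ≤ k := by
      have : CT.card < T.card := Finset.card_lt_card
        ((Finset.ssubset_iff_of_subset hCTT).2 ⟨b₀, hb₀, hb₀C⟩)
      omega
    by_cases hcase : ∃ x ∈ A', ¬ G.Adj e x
    · obtain ⟨x, hx, hex⟩ := hcase
      obtain ⟨v, hv, hev, hch⟩ := ih CT A' hcard (fun y hy => hTV (hCTT hy))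
        (hA'A.trans hAV) e heC x hx hex
      have hbv : ¬ G.Adj b₀ v := by
        intro h
        obtain ⟨hvA, f, hf, hfv⟩ := hv
        exact hev (claim f hf v hvA h hfv)
      refine ⟨v, hv.1, hbv, fun u hu w hw hvu hvw => ?_⟩
      have huC := hnbC v hv hbv u hu hvu
      have hwC := hnbC v hv hbv w hw hvw
      rcases hch u huC w hwC hvu hvw with h | h
      · exact Or.inl fun y hy hy' => h y ⟨hy, u, huC, hy'⟩ hy'
      · exact Or.inr fun y hy hy' => h y ⟨hy, w, hwC, hy'⟩ hy'
    · push Not at hcase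
      obtain ⟨v, hv, hbv, hch⟩ := ih (insert b₀ (CT.erase e)) A' (by
          have h1 := Finset.card_insert_le b₀ (CT.erase e)
          have h2 := Finset.card_erase_add_one heC
          omega) (by
          intro y hy
          simp only [Finset.coe_insert, Set.mem_insert_iff, Finset.mem_coe] at hy
          rcases hy with rfl | hy
          · exact hTV hb₀
          · exact hTV (hCTT (Finset.mem_of_mem_erase hy)))
        (hA'A.trans hAV) b₀ (Finset.mem_insert_self _ _) a haA' hab
      refine ⟨v, hv.1, hbv, fun u hu w hw hvu hvw => ?_⟩
      have huC := hnbC v hv hbv u hu hvu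
      have hwC := hnbC v hv hbv w hw hvw
      by_cases hue : u = e
      · right
        intro y hy hy'
        rw [hue]
        exact hcase y ⟨hy, w, hwC, hy'⟩
      by_cases hwe : w = e
      · left
        intro y hy hy'
        rw [hwe]
        exact hcase y ⟨hy, u, huC, hy'⟩
      rcases hch u (Finset.mem_insert_of_mem (Finset.mem_erase.2 ⟨hue, huC⟩)) w
        (Finset.mem_insert_of_mem (Finset.mem_erase.2 ⟨hwe, hwC⟩)) hvu hvw with h | h
      · exact Or.inl fun y hy hy' => h y ⟨hy, u, huC, hy'⟩ hy'
      · exact Or.inr fun y hy hy' => h y ⟨hy, w, hwC, hy'⟩ hy'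

theorem exists_ws_left {α : Type} [Fintype α] (G : SimpleGraph α)
    (hG : ∀ n : ℕ, 6 ≤ n → ¬ HasInducedCycleOn G n) (V₁ V₂ : Set α)
    (hb : IsBipartitionOf G V₁ V₂) (hne : V₁.Nonempty) :
    ∃ v ∈ V₁, WeaklySimplicialVtx G v := by
  have hdis : ∀ x, x ∈ V₁ → x ∈ V₂ → False := fun x h1 h2 =>
    Set.disjoint_left.1 hb.2.1 h1 h2
  have h12 : ∀ x ∈ V₁, ∀ y, G.Adj x y → y ∈ V₂ := by
    intro x hx y h
    rcases hb.2.2 x y h with h | h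
    · exact h.2
    · exact (hdis _ hx h.1).elim
  have h21 : ∀ x ∈ V₂, ∀ y, G.Adj x y → y ∈ V₁ := by
    intro x hx y h
    rcases hb.2.2 x y h with h | h
    · exact (hdis _ h.1 hx).elim
    · exact h.2
  suffices h : ∃ v ∈ V₁, ∀ u ∈ V₂, ∀ w ∈ V₂, G.Adj v u → G.Adj v w →
        (∀ x ∈ V₁, G.Adj u x → G.Adj w x) ∨ (∀ x ∈ V₁, G.Adj w x → G.Adj u x) by
    obtain ⟨v, hv, h⟩ := h
    refine ⟨v, hv, fun u w hu hw huw => ?_, fun u w hu hw => ?_⟩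
    · exact hdis w (h21 _ (h12 _ hv _ hu) _ huw) (h12 _ hv _ hw)
    · have hu2 := h12 _ hv _ hu
      have hw2 := h12 _ hv _ hw
      rcases h u hu2 w hw2 hu hw with h | h
      · exact Or.inl fun x hx => h x (h21 _ hu2 _ hx) hx
      · exact Or.inr fun x hx => h x (h21 _ hw2 _ hx) hx
  by_cases hc : ∃ b ∈ V₂, ∃ a ∈ V₁, ¬ G.Adj b a
  · obtain ⟨b, hbV, a, ha, hab⟩ := hc
    obtain ⟨v, hv, _, h⟩ := exists_nest G hG V₁ V₂ hb V₂.toFinset.card V₂.toFinset V₁ le_rfl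
      (by simp) subset_rfl b (by simpa using hbV) a ha hab
    exact ⟨v, hv, fun u hu w hw => h u (by simpa using hu) w (by simpa using hw)⟩
  · push Not at hc
    obtain ⟨a, ha⟩ := hne
    exact ⟨a, ha, fun u hu w hw _ _ => Or.inl fun x hx _ => hc w hw x hx⟩

theorem IsBipartitionOf.swap {α : Type} {G : SimpleGraph α} {V₁ V₂ : Set α}
    (h : IsBipartitionOf G V₁ V₂) : IsBipartitionOf G V₂ V₁ :=
  ⟨by rw [Set.union_comm]; exact h.1, h.2.1.symm, fun u v huv => (h.2.2 u v huv).symm⟩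

theorem exists_bipartition {α : Type} {G : SimpleGraph α} (h : G.Colorable 2) :
    ∃ V₁ V₂, IsBipartitionOf G V₁ V₂ := by
  obtain ⟨c⟩ := h
  refine ⟨{x | c x = 0}, {x | c x = 1}, ?_, ?_, ?_⟩
  · ext x
    simp only [Set.mem_union, Set.mem_ofPred_eq, Set.mem_univ, iff_true]
    generalize c x = y
    revert y; decide
  · rw [Set.disjoint_left]
    intro x hx hx'
    simp only [Set.mem_ofPred_eq] at hx hx'
    rw [hx] at hx'
    exact absurd hx' (by decide)
  · intro u v huv
    have := c.valid huv
    simp only [Set.mem_ofPred_eq]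
    revert this
    generalize c u = y
    generalize c v = z
    revert y z; decide

theorem colorable_of_ws {α : Type} [Fintype α] (G : SimpleGraph α)
    (h : ∀ S : Set α, S.Nonempty → ∃ v : S, WeaklySimplicialVtx (G.induce S) v) :
    ∀ (k : ℕ) (S : Finset α), S.card = k →
      ∃ c : α → Bool, ∀ u ∈ S, ∀ v ∈ S, G.Adj u v → c u ≠ c v := by
  intro k
  induction k with
  | zero =>
    intro S hS
    have : S = ∅ := by simpa using hS
    subst this
    exact ⟨fun _ => true, by simp⟩
  | succ k ih =>
    intro S hS
    have hne : (S : Set α).Nonempty := by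
      rw [Finset.coe_nonempty, ← Finset.card_pos]; omega
    obtain ⟨⟨v, hv⟩, hind, hch⟩ := h S hne
    have hv' : v ∈ S := hv
    obtain ⟨c, hc⟩ := ih (S.erase v) (by rw [Finset.card_erase_of_mem hv']; omega)
    have hind' : ∀ u ∈ S, ∀ w ∈ S, G.Adj v u → G.Adj v w → ¬ G.Adj u w :=
      fun u hu w hw => hind ⟨u, hu⟩ ⟨w, hw⟩
    have hch' : ∀ u ∈ S, ∀ w ∈ S, G.Adj v u → G.Adj v w →
        (∀ x ∈ S, G.Adj u x → G.Adj w x) ∨ (∀ x ∈ S, G.Adj w x → G.Adj u x) := by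
      intro u hu w hw h1 h2
      rcases hch ⟨u, hu⟩ ⟨w, hw⟩ h1 h2 with h | h
      · exact Or.inl fun x hx hx' => h (show (⟨x, hx⟩ : (S : Set α)) ∈ _ from hx')
      · exact Or.inr fun x hx hx' => h (show (⟨x, hx⟩ : (S : Set α)) ∈ _ from hx')
    by_cases hN : ∃ w ∈ S, G.Adj v w
    swap
    · push Not at hN
      refine ⟨c, fun u hu w hw huw => ?_⟩
      refine hc u (Finset.mem_erase.2 ⟨?_, hu⟩) w (Finset.mem_erase.2 ⟨?_, hw⟩) huw
      · rintro rfl; exact hN w hw huw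
      · rintro rfl; exact hN u hu huw.symm
    obtain ⟨w₀, hw₀S, hw₀⟩ := hN
    obtain ⟨w₁, hw₁, hmax⟩ := Finset.exists_max_image (S.filter (fun w => G.Adj v w))
      (fun w => (S.filter (fun x => G.Adj w x)).card) ⟨w₀, by simp [hw₀S, hw₀]⟩
    simp only [Finset.mem_filter, and_imp] at hw₁ hmax
    have hdom : ∀ w ∈ S, G.Adj v w → ∀ x ∈ S, G.Adj w x → G.Adj w₁ x := by
      intro w hw hvw x hx hwx
      rcases hch' w hw w₁ hw₁.1 hvw hw₁.2 with h | h
      · exact h x hx hwx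
      · by_contra hno
        refine absurd (hmax w hw hvw) (not_le.2 (Finset.card_lt_card ?_))
        rw [Finset.ssubset_iff_of_subset]
        · exact ⟨x, by simp [hx, hwx], by simp [hno]⟩
        · intro y hy
          simp only [Finset.mem_filter] at hy ⊢
          exact ⟨hy.1, h y hy.1 hy.2⟩
    have hcol : ∀ w ∈ S, G.Adj v w → ∀ x ∈ S, x ≠ v → G.Adj w x → c x ≠ c w₁ := by
      intro w hw hvw x hx hxv hwx
      exact hc x (Finset.mem_erase.2 ⟨hxv, hx⟩) w₁
        (Finset.mem_erase.2 ⟨hw₁.2.ne', hw₁.1⟩) (hdom w hw hvw x hx hwx).symm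
    refine ⟨fun x => if x = v then !(c w₁) else if G.Adj v x then c w₁ else c x,
      fun u hu w hw huw => ?_⟩
    dsimp only
    by_cases huv : u = v
    · subst huv
      simp [huw.ne', huw]
    by_cases hwv : w = v
    · subst hwv
      simp [huw.ne, huw.symm]
    rw [if_neg huv, if_neg hwv]
    by_cases h1 : G.Adj v u <;> by_cases h2 : G.Adj v w
    · exact absurd huw (hind' u hu w hw h1 h2)
    · rw [if_pos h1, if_neg h2]
      exact (hcol u hu h1 w hw hwv huw).symm
    · rw [if_neg h1, if_pos h2]
      exact hcol w hw h2 u hu huv huw.symm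
    · rw [if_neg h1, if_neg h2]
      exact hc u (Finset.mem_erase.2 ⟨huv, hu⟩) w (Finset.mem_erase.2 ⟨hwv, hw⟩) huw

theorem no_cycle_of_ws {α : Type} (G : SimpleGraph α)
    (h : ∀ S : Set α, S.Nonempty → ∃ v : S, WeaklySimplicialVtx (G.induce S) v)
    (n : ℕ) (hn : 6 ≤ n) : ¬ HasInducedCycleOn G n := by
  rintro ⟨f, hf, hadj⟩
  obtain ⟨⟨_, i, rfl⟩, -, hch⟩ := h (Set.range f) ⟨f 0, 0, rfl⟩
  have h2 : (2 : ZMod n) ≠ 0 := by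
    intro h0
    have : ((2 : ℕ) : ZMod n) = 0 := by exact_mod_cast h0
    rw [ZMod.natCast_eq_zero_iff] at this
    have := Nat.le_of_dvd (by norm_num) this
    omega
  have h4 : (4 : ZMod n) ≠ 0 := by
    intro h0
    have : ((4 : ℕ) : ZMod n) = 0 := by exact_mod_cast h0
    rw [ZMod.natCast_eq_zero_iff] at this
    have := Nat.le_of_dvd (by norm_num) this
    omega
  have key := hch ⟨f (i+1), i+1, rfl⟩ ⟨f (i-1), i-1, rfl⟩
    ((hadj _ _).2 (Or.inl rfl)) ((hadj _ _).2 (Or.inr (by ring)))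
  rcases key with key | key
  · have m : G.Adj (f (i-1)) (f (i+2)) :=
      @key ⟨f (i+2), i+2, rfl⟩ ((hadj _ _).2 (Or.inl (by ring)))
    rcases (hadj _ _).1 m with h | h
    · exact h2 (by linear_combination h)
    · exact h4 (by linear_combination -h)
  · have m : G.Adj (f (i+1)) (f (i-2)) :=
      @key ⟨f (i-2), i-2, rfl⟩ ((hadj _ _).2 (Or.inr (by ring)))
    rcases (hadj _ _).1 m with h | h
    · exact h4 (by linear_combination -h)
    · exact h2 (by linear_combination h)

theorem exists_ws {α : Type} [Fintype α] [Nonempty α] (G : SimpleGraph α)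
    (hG : ChordalBipartite G) : ∃ v, WeaklySimplicialVtx G v := by
  obtain ⟨V₁, V₂, hb⟩ := exists_bipartition hG.1
  obtain ⟨x⟩ := ‹Nonempty α›
  have hx : x ∈ V₁ ∪ V₂ := hb.1 ▸ Set.mem_univ x
  rcases hx with hx | hx
  · obtain ⟨v, _, h⟩ := exists_ws_left G hG.2 V₁ V₂ hb ⟨x, hx⟩
    exact ⟨v, h⟩
  · obtain ⟨v, _, h⟩ := exists_ws_left G hG.2 V₂ V₁ hb.swap ⟨x, hx⟩
    exact ⟨v, h⟩

theorem ChordalBipartite.induce {α : Type} {G : SimpleGraph α} (hG : ChordalBipartite G)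
    (S : Set α) : ChordalBipartite (G.induce S) := by
  refine ⟨?_, fun n hn ⟨f, hf, hadj⟩ => hG.2 n hn ⟨fun i => (f i).1, ?_, fun i j => hadj i j⟩⟩
  · obtain ⟨c⟩ := hG.1
    exact ⟨SimpleGraph.Coloring.mk (fun x => c x.1) (fun {u v} h => c.valid h)⟩
  · exact Subtype.val_injective.comp hf

end Helpers

/-- a (finite) graph is chordal bipartite iff every nonempty induced
subgraph has a weakly simplicial vertex; moreover every nontrivial chordal bipartite
graph has a weakly simplicial vertex in each partition class. -/
theorem chordalBipartite_iff_weaklySimplicial {α : Type} [Fintype α]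
    (G : SimpleGraph α) :
    (ChordalBipartite G ↔
        ∀ S : Set α, S.Nonempty → ∃ v : S, WeaklySimplicialVtx (G.induce S) v) ∧
      (ChordalBipartite G → G.edgeSet.Nonempty →
        ∀ V₁ V₂ : Set α, IsBipartitionOf G V₁ V₂ →
          (∃ v ∈ V₁, WeaklySimplicialVtx G v) ∧ ∃ v ∈ V₂, WeaklySimplicialVtx G v) := by
  classical
  refine ⟨⟨fun hG S hS => ?_, fun h => ⟨?_, no_cycle_of_ws G h⟩⟩, fun hG hE V₁ V₂ hb => ?_⟩
  · have : Nonempty S := hS.to_subtype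
    have : Fintype S := Fintype.ofFinite S
    exact exists_ws _ (hG.induce S)
  · obtain ⟨c, hc⟩ := colorable_of_ws G h _ Finset.univ rfl
    have C : G.Coloring Bool := SimpleGraph.Coloring.mk c
      (fun {u v} huv => hc u (Finset.mem_univ _) v (Finset.mem_univ _) huv)
    simpa using C.colorable
  · obtain ⟨e, he⟩ := hE
    induction e using Sym2.ind with
    | _ x y =>
      have hne : V₁.Nonempty ∧ V₂.Nonempty := by
        rcases hb.2.2 x y he with h | h
        · exact ⟨⟨x, h.1⟩, ⟨y, h.2⟩⟩
        · exact ⟨⟨y, h.2⟩, ⟨x, h.1⟩⟩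
      exact ⟨exists_ws_left G hG.2 V₁ V₂ hb hne.1, exists_ws_left G hG.2 V₂ V₁ hb.swap hne.2⟩
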